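/- Let −1 ≤ B < A ≤ 1 and let f be analytic on 𝔻 with f(0) = 0, f'(0) = 1, f(z) ≠ 0 on 𝔻 \ {0}, and z f'(z)/f(z) ∈ {(1 + Aw)/(1 + Bw) : w ∈ 𝔻} for every z ∈ 𝔻 \ {0} (i.e. f ∈ S*[A,B]). Define R₁ = 1/√(B(3B − 2A)), R₂ = min{1, 1/(2A − B)} and R₃ = min{1, 3/(2A − 5B)}, and set ρ = R₂ if B ≥ 0; if B < 0, set ρ = R₂ when R₂ ≤ R₁ and ρ = R₃ when R₂ > R₁. Then z f'(z)/f(z) ∈ Ω_car for every z with 0 < |z| < ρ. -/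

import Mathlib

open Complex Metric

def omegaCar : Set ℂ := {w : ℂ | ∃ u : ℂ, ‖u‖ < 1 ∧ w = 1 + u + u ^ 2 / 2}

def SCar (f : ℂ → ℂ) : Prop :=
  DifferentiableOn ℂ f (Metric.ball (0 : ℂ) 1) ∧ f 0 = 0 ∧ deriv f 0 = 1 ∧
    (∀ z : ℂ, ‖z‖ < 1 → z ≠ 0 → f z ≠ 0) ∧
    (∀ z : ℂ, ‖z‖ < 1 → z ≠ 0 → z * deriv f z / f z ∈ omegaCar)

/-!
By the Schwarz lemma, `z f'(z) / f(z)` lies in the image under `w ↦ (1 + A w) / (1 + B w)` of the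
closed disk of radius `r = ‖z‖`. That image is the disk having the real segment from
`(1 - A r) / (1 - B r)` to `(1 + A r) / (1 + B r)` as a diameter. On the other hand, the cardioid
region contains the disk of radius `1` around `3 / 2`: writing its points as `(v ^ 2 + 1) / 2`, this
says that the half-lemniscate `‖v ^ 2 - 2‖ < 2`, `0 ≤ re v` is contained in `‖v - 1‖ < 1`. It
therefore suffices that the left end of the diameter exceeds `1 / 2`, i.e. `(2 A - B) r < 1`, and
that the right end stays below `5 / 2`, i.e. `(2 A - 5 B) r < 3`. Which of the two conditions is the
stronger one depends on the side of `3 / 2` on which the center of the image disk lies, and it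
passes through `3 / 2` at `r = R₁`.
-/

lemma exists_sq_eq_and_re_nonneg (a : ℂ) : ∃ v : ℂ, v ^ 2 = a ∧ 0 ≤ v.re := by
  obtain ⟨v, hv⟩ := IsAlgClosed.exists_pow_nat_eq a two_pos
  rcases le_total 0 v.re with hre | hre
  · exact ⟨v, hv, hre⟩
  · exact ⟨-v, by rw [neg_sq, hv], by simpa using hre⟩

lemma norm_sub_one_lt_one_iff {v : ℂ} : ‖v - 1‖ < 1 ↔ ‖v‖ ^ 2 < 2 * v.re := by
  rw [← sq_lt_one_iff₀ (norm_nonneg _), Complex.sq_norm, Complex.sq_norm, normSq_apply,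
    normSq_apply, sub_re, sub_im, one_re, one_im]
  constructor <;> intro h <;> linarith

lemma norm_sub_one_lt_one_of_norm_sq_sub_two_lt {v : ℂ} (hre : 0 ≤ v.re)
    (hv : ‖v ^ 2 - 2‖ < 2) : ‖v - 1‖ < 1 := by
  rw [norm_sub_one_lt_one_iff]
  have h_lemniscate : (‖v‖ ^ 2) ^ 2 < 4 * (v.re ^ 2 - v.im ^ 2) := by
    have h_sq : ‖v ^ 2 - 2‖ ^ 2 < 2 ^ 2 := by gcongr
    rw [Complex.sq_norm, normSq_apply] at h_sq
    rw [Complex.sq_norm, normSq_apply]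
    simp only [sub_re, sub_im, pow_two, mul_re, mul_im, re_ofNat, im_ofNat] at h_sq
    linarith
  refine lt_of_pow_lt_pow_left₀ 2 (by positivity) ?_
  linarith [sq_nonneg v.im]

lemma ball_three_halves_one_subset_omegaCar : ball (3 / 2 : ℂ) 1 ⊆ omegaCar := by
  intro p hp
  obtain ⟨v, hv, hre⟩ := exists_sq_eq_and_re_nonneg (2 * p - 1)
  refine ⟨v - 1, norm_sub_one_lt_one_of_norm_sq_sub_two_lt hre ?_,
    by linear_combination (-1 / 2 : ℂ) * hv⟩
  have h_double : v ^ 2 - 2 = 2 * (p - 3 / 2) := by rw [hv]; ring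
  rw [h_double, norm_mul, Complex.norm_ofNat]
  linarith [mem_ball_iff_norm.1 hp]

lemma mem_image_closedBall_of_mapsTo_image_ball {p φ ψ : ℂ → ℂ} {R : ℝ}
    (hp : DifferentiableOn ℂ p (ball 0 R)) (hψ : DifferentiableOn ℂ ψ (φ '' ball 0 R))
    (hψφ : Set.LeftInvOn ψ φ (ball 0 R)) (hmaps : Set.MapsTo p (ball 0 R) (φ '' ball 0 R))
    (h0 : p 0 = φ 0) {z : ℂ} (hz : ‖z‖ < R) : p z ∈ φ '' closedBall 0 ‖z‖ := by
  have hR : (0 : ℂ) ∈ ball 0 R := mem_ball_self ((norm_nonneg z).trans_lt hz)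
  have hmaps_self : Set.MapsTo (ψ ∘ p) (ball 0 R) (ball 0 R) := by
    intro x hx
    obtain ⟨w, hw, hwx⟩ := hmaps hx
    rwa [Function.comp_apply, ← hwx, hψφ hw]
  have h_schwarz : ‖(ψ ∘ p) z‖ ≤ ‖z‖ :=
    Complex.norm_le_norm_of_mapsTo_ball (hψ.comp hp hmaps)
      (hmaps_self.mono_right ball_subset_closedBall)
      (by rw [Function.comp_apply, h0, hψφ hR]) hz
  refine ⟨ψ (p z), mem_closedBall_zero_iff.2 h_schwarz, ?_⟩
  obtain ⟨w, hw, hwz⟩ := hmaps (mem_ball_zero_iff.2 hz)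
  rw [← hwz, hψφ hw]

section StarlikeQuotient

/-- The quotient `z f'(z) / f(z)` whose values define classes of starlike functions, for `f` with
`f 0 = 0`. Dividing by `dslope f 0 z`, which is `f z / z` off the origin, removes the singularity
at `0`. -/
noncomputable def starlikeQuotient (f : ℂ → ℂ) (z : ℂ) : ℂ := deriv f z / dslope f 0 z

variable {f : ℂ → ℂ}

lemma starlikeQuotient_zero (hf1 : deriv f 0 ≠ 0) : starlikeQuotient f 0 = 1 := by
  rw [starlikeQuotient, dslope_same, div_self hf1]

lemma starlikeQuotient_of_ne_zero (hf0 : f 0 = 0) {z : ℂ} (hz : z ≠ 0) :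
    starlikeQuotient f z = z * deriv f z / f z := by
  rw [starlikeQuotient, dslope_of_ne f hz, slope_def_field, hf0, sub_zero, sub_zero,
    div_div_eq_mul_div, mul_comm]

lemma differentiableOn_starlikeQuotient {s : Set ℂ} (hs : IsOpen s) (h0s : 0 ∈ s)
    (hf : DifferentiableOn ℂ f s) (hf0 : f 0 = 0) (hf1 : deriv f 0 ≠ 0)
    (hne : ∀ z ∈ s, z ≠ 0 → f z ≠ 0) : DifferentiableOn ℂ (starlikeQuotient f) s := by
  refine (hf.deriv hs).div ((differentiableOn_dslope (hs.mem_nhds h0s)).2 hf) fun z hz ↦ ?_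
  rcases eq_or_ne z 0 with rfl | hz0
  · rwa [dslope_same]
  · rw [dslope_of_ne f hz0, slope_def_field, hf0, sub_zero, sub_zero]
    exact div_ne_zero (hne z hz hz0) hz0

end StarlikeQuotient

section Janowski

/-- The Janowski map `w ↦ (1 + A w) / (1 + B w)`, whose values on the unit disk define the class
`S*[A, B]`. It takes the junk value `0` at the pole `w = -1 / B`. -/
noncomputable def janowski (A B w : ℂ) : ℂ := (1 + A * w) / (1 + B * w)

/-- The inverse `p ↦ (p - 1) / (A - B p)` of the Janowski map. -/
noncomputable def janowskiInv (A B p : ℂ) : ℂ := (p - 1) / (A - B * p)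

variable {A B : ℂ}

lemma janowski_zero (A B : ℂ) : janowski A B 0 = 1 := by simp [janowski]

lemma one_add_mul_ne_zero (hB : ‖B‖ ≤ 1) {w : ℂ} (hw : ‖w‖ < 1) : 1 + B * w ≠ 0 := by
  intro h
  have h_norm : ‖B‖ * ‖w‖ = 1 := by
    rw [← norm_mul, eq_neg_of_add_eq_zero_right h, norm_neg, norm_one]
  exact (mul_lt_one_of_nonneg_of_lt_one_right hB (norm_nonneg w) hw).ne h_norm

lemma sub_mul_janowski {w : ℂ} (hw : 1 + B * w ≠ 0) :
    A - B * janowski A B w = (A - B) / (1 + B * w) := by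
  rw [janowski, eq_div_iff hw, sub_mul, mul_assoc, div_mul_cancel₀ _ hw]
  ring

lemma janowski_sub_one {w : ℂ} (hw : 1 + B * w ≠ 0) :
    janowski A B w - 1 = w * ((A - B) / (1 + B * w)) := by
  rw [janowski, div_sub_one hw]
  ring

lemma leftInvOn_janowskiInv (hAB : A ≠ B) :
    Set.LeftInvOn (janowskiInv A B) (janowski A B) {w | 1 + B * w ≠ 0} := by
  intro w hw
  rw [janowskiInv, janowski_sub_one hw, sub_mul_janowski hw]
  exact mul_div_cancel_right₀ w (div_ne_zero (sub_ne_zero.2 hAB) hw)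

lemma differentiableOn_janowskiInv (hAB : A ≠ B) :
    DifferentiableOn ℂ (janowskiInv A B) (janowski A B '' {w | 1 + B * w ≠ 0}) := by
  refine DifferentiableOn.div (by fun_prop) (by fun_prop) ?_
  rintro _ ⟨w, hw, rfl⟩
  rw [sub_mul_janowski hw]
  exact div_ne_zero (sub_ne_zero.2 hAB) hw

lemma mul_deriv_div_mem_janowski_image_closedBall (hAB : A ≠ B) (hB : ‖B‖ ≤ 1) {f : ℂ → ℂ}
    (hf : DifferentiableOn ℂ f (ball 0 1)) (hf0 : f 0 = 0) (hf1 : deriv f 0 ≠ 0)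
    (hne : ∀ z ∈ ball (0 : ℂ) 1, z ≠ 0 → f z ≠ 0)
    (hsub : ∀ z ∈ ball (0 : ℂ) 1, z ≠ 0 → z * deriv f z / f z ∈ janowski A B '' ball 0 1)
    {z : ℂ} (hz : ‖z‖ < 1) (hz0 : z ≠ 0) :
    z * deriv f z / f z ∈ janowski A B '' closedBall 0 ‖z‖ := by
  have h0 : (0 : ℂ) ∈ ball 0 1 := mem_ball_self one_pos
  have h_pole_free : ball (0 : ℂ) 1 ⊆ {w | 1 + B * w ≠ 0} := fun w hw ↦
    one_add_mul_ne_zero hB (mem_ball_zero_iff.1 hw)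
  have hmaps : Set.MapsTo (starlikeQuotient f) (ball 0 1) (janowski A B '' ball 0 1) := by
    intro x hx
    rcases eq_or_ne x 0 with rfl | hx0
    · exact ⟨0, h0, by rw [janowski_zero, starlikeQuotient_zero hf1]⟩
    · rw [starlikeQuotient_of_ne_zero hf0 hx0]
      exact hsub x hx hx0
  rw [← starlikeQuotient_of_ne_zero hf0 hz0]
  exact mem_image_closedBall_of_mapsTo_image_ball
    (differentiableOn_starlikeQuotient isOpen_ball h0 hf hf0 hf1 hne)
    ((differentiableOn_janowskiInv hAB).mono (Set.image_mono h_pole_free))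
    ((leftInvOn_janowskiInv hAB).mono h_pole_free) hmaps
    (by rw [starlikeQuotient_zero hf1, janowski_zero]) hz

end Janowski

section JanowskiDisk

lemma sq_norm_ofReal_add_ofReal_mul (a b : ℝ) (w : ℂ) :
    ‖(a + b * w : ℂ)‖ ^ 2 = a ^ 2 + 2 * (a * b) * w.re + b ^ 2 * ‖w‖ ^ 2 := by
  simp only [Complex.sq_norm, normSq_apply, add_re, add_im, re_ofReal_mul, im_ofReal_mul,
    ofReal_re, ofReal_im]
  ring

-- For fixed `‖w‖` both squared norms are affine in `w.re`, so only real `w` of that norm matter.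
lemma norm_ofReal_add_ofReal_mul_lt {a b c d : ℝ} {w : ℂ}
    (hpos : |a + b * ‖w‖| < |c + d * ‖w‖|) (hneg : |a - b * ‖w‖| < |c - d * ‖w‖|) :
    ‖(a + b * w : ℂ)‖ < ‖(c + d * w : ℂ)‖ := by
  rw [← sq_lt_sq] at hpos hneg
  refine lt_of_pow_lt_pow_left₀ 2 (norm_nonneg _) ?_
  rw [sq_norm_ofReal_add_ofReal_mul, sq_norm_ofReal_add_ofReal_mul]
  obtain ⟨hre_lower, hre_upper⟩ := abs_le.1 (abs_re_le_norm w)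
  rcases le_total (a * b) (c * d) with h | h
  · have := mul_le_mul_of_nonneg_left hre_lower (sub_nonneg.2 h)
    linarith
  · have := mul_le_mul_of_nonneg_left hre_upper (sub_nonneg.2 h)
    linarith

variable {A B r : ℝ}

lemma abs_mul_lt_one (hB : |B| ≤ 1) (hr0 : 0 ≤ r) (hr1 : r < 1) : |B * r| < 1 := by
  rw [abs_mul, abs_of_nonneg hr0]
  exact mul_lt_one_of_nonneg_of_lt_one_right hB hr0 hr1

lemma janowski_mem_ball_three_halves {w : ℂ} (hB : |B| ≤ 1) (hBA : B ≤ A) (hw : ‖w‖ < 1)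
    (hleft : (2 * A - B) * ‖w‖ < 1) (hright : (2 * A - 5 * B) * ‖w‖ < 3) :
    janowski A B w ∈ ball (3 / 2) 1 := by
  have h_den : 1 + (B : ℂ) * w ≠ 0 := one_add_mul_ne_zero (by simpa using hB) hw
  have h_sub : janowski A B w - 3 / 2 =
      ((-1 : ℝ) + (2 * A - 3 * B : ℝ) * w) / ((2 : ℝ) + (2 * B : ℝ) * w) := by
    have h_double : ((2 : ℝ) + (2 * B : ℝ) * w : ℂ) = (1 + B * w) * 2 := by
      push_cast
      ring
    rw [h_double, janowski, div_sub_div _ _ h_den two_ne_zero]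
    push_cast
    ring
  have h_lt : ‖((-1 : ℝ) + (2 * A - 3 * B : ℝ) * w : ℂ)‖ < ‖((2 : ℝ) + (2 * B : ℝ) * w : ℂ)‖ := by
    have hw0 := norm_nonneg w
    obtain ⟨hBw_lower, hBw_upper⟩ := abs_lt.1 (abs_mul_lt_one hB hw0 hw)
    have h_AB : 0 ≤ (A - B) * ‖w‖ := mul_nonneg (sub_nonneg.2 hBA) hw0
    apply norm_ofReal_add_ofReal_mul_lt
    · rw [abs_of_pos (a := 2 + 2 * B * ‖w‖) (by linarith), abs_lt]
      constructor <;> linarith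
    · rw [abs_of_pos (a := 2 - 2 * B * ‖w‖) (by linarith [hBw_upper]), abs_lt]
      constructor <;> linarith
  rw [mem_ball_iff_norm, h_sub, norm_div]
  exact (div_lt_one ((norm_nonneg _).trans_lt h_lt)).2 h_lt

lemma mul_lt_of_mul_lt_of_le {k t c : ℝ} (hc : 0 < c) (ht : 0 ≤ t) (htr : t ≤ r)
    (hkr : k * r < c) : k * t < c := by
  rcases le_total 0 k with hk | hk
  · exact (mul_le_mul_of_nonneg_left htr hk).trans_lt hkr
  · exact (mul_nonpos_of_nonpos_of_nonneg hk ht).trans_lt hc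

lemma janowski_image_closedBall_subset_omegaCar (hB : |B| ≤ 1) (hBA : B ≤ A) (hr : r < 1)
    (hleft : (2 * A - B) * r < 1) (hright : (2 * A - 5 * B) * r < 3) :
    janowski A B '' closedBall 0 r ⊆ omegaCar := by
  rintro _ ⟨w, hw, rfl⟩
  rw [mem_closedBall_zero_iff] at hw
  exact ball_three_halves_one_subset_omegaCar <|
    janowski_mem_ball_three_halves hB hBA (hw.trans_lt hr)
      (mul_lt_of_mul_lt_of_le one_pos (norm_nonneg w) hw hleft)
      (mul_lt_of_mul_lt_of_le three_pos (norm_nonneg w) hw hright)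

end JanowskiDisk

section Radius

variable {A B r : ℝ}

lemma le_one_div_sqrt_iff {d : ℝ} (hd : 0 < d) (hr : 0 ≤ r) : r ≤ 1 / √d ↔ d * r ^ 2 ≤ 1 := by
  rw [one_div, ← Real.sqrt_inv, Real.le_sqrt hr (inv_nonneg.2 hd.le), ← one_div,
    le_div_iff₀ hd, mul_comm]

/- Up to positive factors, `3 - (2 A - 5 B) r` is the signed distance from the right end of the
image disk to `5 / 2`, `1 - (2 A - B) r` the one from `1 / 2` to its left end, and
`1 - B (3 B - 2 A) r ^ 2` the one from its center to `3 / 2`. -/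
lemma janowski_gap_identity (A B r : ℝ) : (3 - (2 * A - 5 * B) * r) * (1 - B * r) =
    2 * (1 - B * (3 * B - 2 * A) * r ^ 2) + (1 - (2 * A - B) * r) * (1 + B * r) := by
  ring

lemma right_bound_of_left_bound (hBr : |B * r| < 1)
    (hcenter : B * (3 * B - 2 * A) * r ^ 2 ≤ 1) (hleft : (2 * A - B) * r < 1) :
    (2 * A - 5 * B) * r < 3 := by
  obtain ⟨hBr_lower, hBr_upper⟩ := abs_lt.1 hBr
  have h_left_gap : 0 < (1 - (2 * A - B) * r) * (1 + B * r) :=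
    mul_pos (sub_pos.2 hleft) (by linarith)
  have h_right_gap : 0 < (3 - (2 * A - 5 * B) * r) * (1 - B * r) := by
    rw [janowski_gap_identity]
    linarith
  exact sub_pos.1 (pos_of_mul_pos_left h_right_gap (sub_nonneg.2 hBr_upper.le))

lemma left_bound_of_right_bound (hBr : |B * r| < 1)
    (hcenter : 1 ≤ B * (3 * B - 2 * A) * r ^ 2) (hright : (2 * A - 5 * B) * r < 3) :
    (2 * A - B) * r < 1 := by
  obtain ⟨hBr_lower, hBr_upper⟩ := abs_lt.1 hBr
  have h_right_gap : 0 < (3 - (2 * A - 5 * B) * r) * (1 - B * r) :=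
    mul_pos (sub_pos.2 hright) (sub_pos.2 hBr_upper)
  have h_left_gap : 0 < (1 - (2 * A - B) * r) * (1 + B * r) := by
    rw [janowski_gap_identity] at h_right_gap
    linarith
  exact sub_pos.1 (pos_of_mul_pos_left h_left_gap (by linarith))

lemma lt_min_div_iff {b c k : ℝ} (hk : 0 < k) : r < min b (c / k) ↔ r < b ∧ k * r < c := by
  rw [lt_min_iff, lt_div_iff₀ hk, mul_comm]

/-- The radius `ρ` of the theorem, with `R₁`, `R₂` and `R₃` written out. Where `2 * A ≤ B`, division
makes `R₂ ≤ 0`, and then `carRadius A B ≤ 0`. -/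
noncomputable def carRadius (A B : ℝ) : ℝ :=
  if 0 ≤ B then min 1 (1 / (2 * A - B))
  else if min 1 (1 / (2 * A - B)) ≤ 1 / √(B * (3 * B - 2 * A)) then min 1 (1 / (2 * A - B))
  else min 1 (3 / (2 * A - 5 * B))

lemma edge_bounds_of_lt_min_left (hB : |B| ≤ 1) (hr0 : 0 < r)
    (hcenter : r < 1 → B * (3 * B - 2 * A) * r ^ 2 ≤ 1) (hr : r < min 1 (1 / (2 * A - B))) :
    r < 1 ∧ (2 * A - B) * r < 1 ∧ (2 * A - 5 * B) * r < 3 := by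
  have hpos : 0 < 2 * A - B := one_div_pos.1 (hr0.trans (lt_min_iff.1 hr).2)
  obtain ⟨hr1, hleft⟩ := (lt_min_div_iff hpos).1 hr
  exact ⟨hr1, hleft,
    right_bound_of_left_bound (abs_mul_lt_one hB hr0.le hr1) (hcenter hr1) hleft⟩

lemma edge_bounds_of_lt_min_right (hB : |B| ≤ 1) (hr0 : 0 ≤ r) (hpos : 0 < 2 * A - 5 * B)
    (hcenter : 1 ≤ B * (3 * B - 2 * A) * r ^ 2) (hr : r < min 1 (3 / (2 * A - 5 * B))) :
    r < 1 ∧ (2 * A - B) * r < 1 ∧ (2 * A - 5 * B) * r < 3 := by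
  obtain ⟨hr1, hright⟩ := (lt_min_div_iff hpos).1 hr
  exact ⟨hr1, left_bound_of_right_bound (abs_mul_lt_one hB hr0 hr1) hcenter hright, hright⟩

lemma edge_bounds_of_lt_carRadius (hB : |B| ≤ 1) (hBA : B ≤ A) (hr0 : 0 < r)
    (hr : r < carRadius A B) :
    r < 1 ∧ (2 * A - B) * r < 1 ∧ (2 * A - 5 * B) * r < 3 := by
  rw [carRadius] at hr
  rcases le_or_gt 0 B with hB0 | hB0
  · rw [if_pos hB0] at hr
    refine edge_bounds_of_lt_min_left hB hr0 (fun hr1 ↦ ?_) hr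
    calc B * (3 * B - 2 * A) * r ^ 2 ≤ B * B * r ^ 2 := by gcongr; linarith
      _ = (B * r) ^ 2 := by ring
      _ ≤ 1 := (sq_le_one_iff_abs_le_one _).2 (abs_mul_lt_one hB hr0.le hr1).le
  rw [if_neg hB0.not_ge] at hr
  have h_center_iff : r ≤ 1 / √(B * (3 * B - 2 * A)) ↔ B * (3 * B - 2 * A) * r ^ 2 ≤ 1 :=
    le_one_div_sqrt_iff (mul_pos_of_neg_of_neg hB0 (by linarith)) hr0.le
  rcases le_or_gt r (1 / √(B * (3 * B - 2 * A))) with hrR₁ | hrR₁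
  · refine edge_bounds_of_lt_min_left hB hr0 (fun _ ↦ h_center_iff.1 hrR₁) ?_
    split_ifs at hr with hR
    · exact hr
    · exact hrR₁.trans_lt (not_le.1 hR)
  · split_ifs at hr with hR
    · exact absurd (hr.trans_le hR) hrR₁.not_gt
    · have hcenter := (not_le.1 (h_center_iff.not.1 hrR₁.not_ge)).le
      exact edge_bounds_of_lt_min_right hB hr0.le (by linarith) hcenter hr

end Radius

theorem stmt_16_general (A B : ℝ) (hB : |B| ≤ 1) (hBA : B < A) (f : ℂ → ℂ)
    (hfd : DifferentiableOn ℂ f (ball 0 1)) (hf0 : f 0 = 0) (hf1 : deriv f 0 ≠ 0)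
    (hfne : ∀ z : ℂ, ‖z‖ < 1 → z ≠ 0 → f z ≠ 0)
    (hsub : ∀ z : ℂ, ‖z‖ < 1 → z ≠ 0 → ∃ w : ℂ, ‖w‖ < 1 ∧ z * deriv f z / f z = janowski A B w)
    (z : ℂ) (hz0 : z ≠ 0) (hz1 : ‖z‖ < 1) (hleft : (2 * A - B) * ‖z‖ < 1)
    (hright : (2 * A - 5 * B) * ‖z‖ < 3) : z * deriv f z / f z ∈ omegaCar := by
  refine janowski_image_closedBall_subset_omegaCar hB hBA.le hz1 hleft hright ?_
  refine mul_deriv_div_mem_janowski_image_closedBall (ofReal_injective.ne hBA.ne')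
    (by simpa using hB) hfd hf0 hf1 (fun x hx ↦ hfne x (mem_ball_zero_iff.1 hx))
    (fun x hx hx0 ↦ ?_) hz1 hz0
  obtain ⟨w, hw, hxw⟩ := hsub x (mem_ball_zero_iff.1 hx) hx0
  exact ⟨w, mem_ball_zero_iff.2 hw, hxw.symm⟩

theorem stmt_16 (A B : ℝ) (hB : -1 ≤ B) (hBA : B < A) (hA : A ≤ 1)
    (f : ℂ → ℂ)
    (hfd : DifferentiableOn ℂ f (Metric.ball (0 : ℂ) 1))
    (hf0 : f 0 = 0) (hf1 : deriv f 0 = 1)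
    (hfne : ∀ z : ℂ, ‖z‖ < 1 → z ≠ 0 → f z ≠ 0)
    (hsub : ∀ z : ℂ, ‖z‖ < 1 → z ≠ 0 → ∃ w : ℂ, ‖w‖ < 1 ∧
      z * deriv f z / f z = (1 + (A : ℂ) * w) / (1 + (B : ℂ) * w))
    (R₁ R₂ R₃ ρ : ℝ)
    (hR₁ : R₁ = 1 / Real.sqrt (B * (3 * B - 2 * A)))
    (hR₂ : R₂ = min 1 (1 / (2 * A - B)))
    (hR₃ : R₃ = min 1 (3 / (2 * A - 5 * B)))
    (hρ : ρ = if 0 ≤ B then R₂ else if R₂ ≤ R₁ then R₂ else R₃) :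
    ∀ z : ℂ, z ≠ 0 → ‖z‖ < ρ → z * deriv f z / f z ∈ omegaCar := by
  intro z hz0 hz
  subst hR₁ hR₂ hR₃ hρ
  have hB1 : |B| ≤ 1 := abs_le.2 ⟨hB, hBA.le.trans hA⟩
  obtain ⟨hz1, hleft, hright⟩ := edge_bounds_of_lt_carRadius hB1 hBA.le (norm_pos_iff.2 hz0) hz
  exact stmt_16_general A B hB1 hBA f hfd hf0 (hf1 ▸ one_ne_zero) hfne hsub z hz0 hz1 hleft hright
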